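/- Let Ω ⊆ ℝ² be an open set, let s : Ω → (0,1), Λᵘ : Ω → ℝ, and τᵘ, τᵛ : Ω → (0,∞) be smooth functions with τᵘ·τᵛ > 1 − s and ∂_u τᵘ = 2·Λᵘ·(τᵘ − 1) on Ω. Define ŝ := 1 − (1 − s)/(τᵘ·τᵛ) (so ŝ ∈ (0,1]) and Λ̂ᵘ := Λᵘ/τᵘ. Then at every point of Ω where ŝ > 0: 2·Λ̂ᵘ − ∂_u ln(ŝ) = −(1/(τᵘτᵛ − 1 + s))·( ∂_u s − 2Λᵘ·(τᵛ − 1 + s) + (1 − s)·(∂_u τᵛ)/τᵛ ). -/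

import Mathlib

/-! With `T = τᵘτᵛ` and `D = T - 1 + s` one has `ŝ = D / T`, so `(ln ŝ)_u = (T_u + s_u)/D - T_u/T`.
Multiplying `2Λ̂ᵘ - (ln ŝ)_u` by `D` gives `2ΛᵘD/τᵘ - s_u - (1 - s)(τᵘ_u/τᵘ + τᵛ_u/τᵛ)`, and
substituting `τᵘ_u = 2Λᵘ(τᵘ - 1)` collapses the `Λᵘ` terms to `2Λᵘ(τᵛ - 1 + s)`. Smoothness enters
only through `hasDerivAt_pdu`. -/

open Real Set
open scoped ContDiff

/-- Partial derivative in the first variable of `ℝ²`. -/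
noncomputable def pdu (f : ℝ × ℝ → ℝ) (p : ℝ × ℝ) : ℝ := deriv (fun t => f (t, p.2)) p.1

/-- On an open set the slice of a smooth function is differentiable, so `pdu` is a genuine
derivative there rather than the default value of `deriv`. -/
lemma hasDerivAt_pdu {Ω : Set (ℝ × ℝ)} (hΩ : IsOpen Ω) {f : ℝ × ℝ → ℝ}
    (hf : ContDiffOn ℝ ∞ f Ω) {p : ℝ × ℝ} (hp : p ∈ Ω) :
    HasDerivAt (fun t => f (t, p.2)) (pdu f p) p.1 := by
  have h : DifferentiableAt ℝ f (p.1, p.2) :=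
    (hf.contDiffAt (hΩ.mem_nhds hp)).differentiableAt (by simp)
  have h2 : DifferentiableAt ℝ (fun t : ℝ => (t, p.2)) p.1 := by fun_prop
  exact (DifferentiableAt.comp (g := f) p.1 h h2).hasDerivAt

/-- the computation leading to the composition criterion (notcomp).
With `ŝ = 1 - (1-s)/(τᵘτᵛ)` and `Λ̂ᵘ = Λᵘ/τᵘ`, and `τᵘ` satisfying (pdetaug),
`2Λ̂ᵘ - (ln ŝ)_u = -(1/(τᵘτᵛ - 1 + s))(s_u - 2Λᵘ(τᵛ - 1 + s) + (1-s)τᵛ_u/τᵛ)`. -/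
theorem composition_criterion_computation
    (Ω : Set (ℝ × ℝ)) (hΩ : IsOpen Ω)
    (s Λu τu τv : ℝ × ℝ → ℝ)
    (hs : ContDiffOn ℝ ∞ s Ω) (hs01 : ∀ p ∈ Ω, s p ∈ Set.Ioo (0:ℝ) 1)
    (hΛu : ContDiffOn ℝ ∞ Λu Ω)
    (hτu : ContDiffOn ℝ ∞ τu Ω) (hτv : ContDiffOn ℝ ∞ τv Ω)
    (hτupos : ∀ p ∈ Ω, 0 < τu p) (hτvpos : ∀ p ∈ Ω, 0 < τv p)
    (hgt : ∀ p ∈ Ω, 1 - s p < τu p * τv p)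
    (hpde : ∀ p ∈ Ω, pdu τu p = 2 * Λu p * (τu p - 1))
    (shat Λuhat : ℝ × ℝ → ℝ)
    (hshat : shat = fun p => 1 - (1 - s p) / (τu p * τv p))
    (hΛuhat : Λuhat = fun p => Λu p / τu p) :
    ∀ p ∈ Ω, 0 < shat p →
      2 * Λuhat p - pdu (fun q => Real.log (shat q)) p =
        -(1 / (τu p * τv p - 1 + s p)) *
          (pdu s p - 2 * Λu p * (τv p - 1 + s p) + (1 - s p) * pdu τv p / τv p) := by
  subst hshat hΛuhat
  intro p hp hpos
  have hs' := hasDerivAt_pdu hΩ hs hp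
  have ha' := hasDerivAt_pdu hΩ hτu hp
  have hb' := hasDerivAt_pdu hΩ hτv hp
  have ha := (hτupos p hp).ne'
  have hb := (hτvpos p hp).ne'
  have hD : τu p * τv p - 1 + s p ≠ 0 := by linarith [hgt p hp]
  have hlog := (((hs'.const_sub 1).fun_div (ha'.fun_mul hb') (mul_ne_zero ha hb)).const_sub
    1).log hpos.ne'
  have hl : pdu (fun q => Real.log (1 - (1 - s q) / (τu q * τv q))) p = _ := hlog.deriv
  have hS : 1 - (1 - s p) / (τu p * τv p) = (τu p * τv p - 1 + s p) / (τu p * τv p) := by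
    field_simp
    ring
  simp only [Prod.mk.eta] at hl
  rw [hl, hpde p hp, hS]
  field_simp
  ring
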